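/- arXiv:1311.1405 — 2 statements merged into one kernel-verified Lean document; each statement's English description precedes it below -/
import Mathlib

section
/- Let d ≥ 1, let Φ₁, Φ₂, a₁, a₂ be Schwartz functions on ℝ^{2d}, and set Φ₀ = π^d (Φ₁#Φ₂) and a₀ = a₁#a₂. For j = 0,1,2 define F_j(X,Y) = 𝒱_{Φ_j} a_j(X+Y, X−Y). Then for all X₀, X₂ ∈ ℝ^{2d}: F₀(X₂, X₀) = ∫_{ℝ^{2d}} e^{2i σ(X₁−X₀, X₂−X₀)} F₁(X₁, X₀) F₂(X₂, X₁) dX₁. -/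
open MeasureTheory Filter
open scoped ENNReal RealInnerProductSpace BigOperators

noncomputable section

/-- The phase space `ℝ^d × ℝ^d ≃ ℝ^{2d}`. -/
abbrev PhS (d : ℕ) : Type := EuclideanSpace ℝ (Fin d) × EuclideanSpace ℝ (Fin d)

/-- The symplectic form `σ((x,ξ),(y,η)) = ⟨y,ξ⟩ - ⟨x,η⟩`. -/
def symplForm {d : ℕ} (X Y : PhS d) : ℝ := ⟪Y.1, X.2⟫ - ⟪X.1, Y.2⟫

/-- The symplectic Fourier transform `(F_σ a)(X) = π^{-d} ∫ a(Y) e^{2iσ(X,Y)} dY`. -/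
def symplFT (d : ℕ) (a : PhS d → ℂ) (X : PhS d) : ℂ :=
  ((Real.pi : ℂ) ^ d)⁻¹ * ∫ Y : PhS d, a Y * Complex.exp (2 * Complex.I * (symplForm X Y : ℂ))

/-- The twisted convolution
`(a ∗_σ b)(X) = (2/π)^{d/2} ∫ a(X-Y) b(Y) e^{2iσ(X,Y)} dY`. -/
def twistConv (d : ℕ) (a b : PhS d → ℂ) (X : PhS d) : ℂ :=
  (((2 / Real.pi) ^ ((d : ℝ) / 2) : ℝ) : ℂ) *
    ∫ Y : PhS d, a (X - Y) * b Y * Complex.exp (2 * Complex.I * (symplForm X Y : ℂ))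

/-- The Weyl product `a # b = (2π)^{-d/2} a ∗_σ (F_σ b)`. -/
def weylProd (d : ℕ) (a b : PhS d → ℂ) : PhS d → ℂ := fun X =>
  (((2 * Real.pi) ^ (-(d : ℝ) / 2) : ℝ) : ℂ) * twistConv d a (symplFT d b) X

/-- The `N`-fold Weyl product `a₁ # ⋯ # a_N` of a list of symbols. -/
def weylProdList (d : ℕ) : List (PhS d → ℂ) → (PhS d → ℂ)
  | [] => fun _ => 0
  | [a] => a
  | a :: b :: l => weylProd d a (weylProdList d (b :: l))

/-- The symplectic short-time Fourier transform
`𝒱_Φ a (X,Y) = π^{-d} ∫ a(Z) conj(Φ(Z-X)) e^{2iσ(Y,Z)} dZ`. -/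
def symplSTFT (d : ℕ) (Φ a : PhS d → ℂ) (X Y : PhS d) : ℂ :=
  ((Real.pi : ℂ) ^ d)⁻¹ *
    ∫ Z : PhS d, a Z * (starRingEnd ℂ) (Φ (Z - X)) *
      Complex.exp (2 * Complex.I * (symplForm Y Z : ℂ))

/-- The `L^p` norm (with values in `[0,∞]`) of an `ℝ≥0∞`-valued function,
with the convention of an essential supremum when `p = ∞`. -/
def lpNormENN {α : Type*} [MeasurableSpace α] (μ : Measure α) (p : ℝ≥0∞)
    (f : α → ℝ≥0∞) : ℝ≥0∞ :=
  if p = ∞ then essSup f μ else (∫⁻ x, f x ^ p.toReal ∂μ) ^ (1 / p.toReal)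

/-- The modulation space norm `‖a‖_{ℳ^{p,q}_{(ω)}}` with respect to the window `Φ`. -/
def modNorm (d : ℕ) (p q : ℝ≥0∞) (ω : PhS d × PhS d → ℝ) (Φ a : PhS d → ℂ) : ℝ≥0∞ :=
  lpNormENN volume q fun Y =>
    lpNormENN volume p fun X => ENNReal.ofReal (‖symplSTFT d Φ a X Y‖ * ω (X, Y))

/-- The Wiener amalgam space norm `‖a‖_{𝒲^{p,q}_{(ω)}}` with respect to the window `Φ`. -/
def wienerNorm (d : ℕ) (p q : ℝ≥0∞) (ω : PhS d × PhS d → ℝ) (Φ a : PhS d → ℂ) : ℝ≥0∞ :=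
  lpNormENN volume p fun X =>
    lpNormENN volume q fun Y => ENNReal.ofReal (‖symplSTFT d Φ a X Y‖ * ω (X, Y))

/-- Membership in the class `𝒫_E` of positive, locally bounded, moderate weights. -/
def IsModerateWeight {E : Type*} [NormedAddCommGroup E] (ω : E → ℝ) : Prop :=
  (∀ x, 0 < ω x) ∧ (∀ r : ℝ, ∃ M : ℝ, ∀ x, ‖x‖ ≤ r → ω x ≤ M) ∧
    ∃ C c : ℝ, 0 < C ∧ 0 < c ∧ ∀ x y, ω (x + y) ≤ C * ω x * Real.exp (c * ‖y‖)

/-- The real number `1/p ∈ [0,1]` associated to `p ∈ [1,∞]`. -/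
def rcp (p : ℝ≥0∞) : ℝ := (p⁻¹).toReal

/-- The Hölder–Young exponent function `R_N(p) = (N-1)⁻¹ (Σ_{j=0}^N 1/p_j - 1)`. -/
def RN (N : ℕ) (p : Fin (N + 1) → ℝ≥0∞) : ℝ :=
  ((∑ j, rcp (p j)) - 1) / ((N : ℝ) - 1)

/-- The Weyl weight condition:
`1 ≲ ω₀(X_N+X₀, X_N-X₀) ∏_{j=1}^N ω_j(X_j+X_{j-1}, X_j-X_{j-1})`. -/
def WeylWeightCond (d N : ℕ) (ω : Fin (N + 1) → (PhS d × PhS d → ℝ)) : Prop :=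
  ∃ C : ℝ, 0 < C ∧ ∀ X : Fin (N + 1) → PhS d,
    1 ≤ C * ω 0 (X (Fin.last N) + X 0, X (Fin.last N) - X 0) *
      ∏ j : Fin N, ω j.succ (X j.succ + X j.castSucc, X j.succ - X j.castSucc)

end

noncomputable section

/-! The Weyl product `a # b` sees `b` only through `F_σ b`, so the second STFT is first moved to the
Fourier side, where `𝒱_Φ a (X, Y) = e^{2iσ(Y,X)} 𝒱_{F_σ Φ} (F_σ a) (Y, X)`. Both sides of the
formula are then integrals of one kernel over `(ℝ^{2d})³`: on the left in the variables `(Z, Y, P)`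
of the STFT and of the two twisted convolutions, on the right in the variables `(U, Y, X₁)` of the
two STFTs and of the outer integral. The measure-preserving substitution `Z = U + Y`,
`P = X₁ + Y - X₂` carries one into the other. -/

open scoped FourierTransform ComplexConjugate BoundedContinuousFunction

section Shear

variable {G E : Type*} [AddCommGroup G] [MeasurableSpace G] [MeasurableAdd₂ G] [MeasurableSub G]
  [NormedAddCommGroup E] [NormedSpace ℝ E] {μ : Measure G} [SFinite μ] [μ.IsAddRightInvariant]

lemma measurePreserving_shear (r : G) :
    MeasurePreserving (fun p : (G × G) × G ↦ ((p.1.1 + p.1.2, p.1.2), p.2 + (p.1.2 - r)))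
      ((μ.prod μ).prod μ) ((μ.prod μ).prod μ) := by
  refine (measurePreserving_add_prod μ μ).skew_product
    (g := fun q x ↦ x + (q.2 - r)) ?_ (.of_forall fun q ↦ map_add_right_eq_self μ (q.2 - r))
  exact measurable_snd.add ((measurable_snd.comp measurable_fst).sub_const r)

lemma integral_integral_integral_eq_integral_shear {f : (G × G) × G → E}
    (hf : Integrable f ((μ.prod μ).prod μ)) (r : G) :
    ∫ z, ∫ y, ∫ p, f ((z, y), p) ∂μ ∂μ ∂μ =
      ∫ x, ∫ q : G × G, f ((q.1 + q.2, q.2), x + (q.2 - r)) ∂(μ.prod μ) ∂μ := by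
  have hshear := measurePreserving_shear (μ := μ) r
  calc ∫ z, ∫ y, ∫ p, f ((z, y), p) ∂μ ∂μ ∂μ
      = ∫ w, f w ∂((μ.prod μ).prod μ) := by
        rw [integral_prod f hf, integral_prod _ hf.integral_prod_left]
    _ = ∫ w : (G × G) × G, f ((w.1.1 + w.1.2, w.1.2), w.2 + (w.1.2 - r))
          ∂((μ.prod μ).prod μ) := by
        conv_lhs => rw [← hshear.map_eq]
        exact integral_map hshear.aemeasurable
          (hshear.map_eq.symm ▸ hf.aestronglyMeasurable)
    _ = _ := integral_prod_symm _ (hshear.integrable_comp_of_integrable hf)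

end Shear

section Phase

/-- The oscillating factor `e^{2it}` common to all the symplectic transforms. -/
def phase (t : ℝ) : ℂ := Complex.exp (2 * Complex.I * (t : ℂ))

lemma phase_add (s t : ℝ) : phase (s + t) = phase s * phase t := by
  simp only [phase, ← Complex.exp_add, Complex.ofReal_add, mul_add]

lemma norm_phase (t : ℝ) : ‖phase t‖ = 1 := by
  simp [phase, Complex.norm_exp]

lemma conj_phase (t : ℝ) : conj (phase t) = phase (-t) := by
  simp [phase, ← Complex.exp_conj, Complex.conj_ofNat]

@[fun_prop]
lemma continuous_phase : Continuous phase := by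
  unfold phase
  fun_prop

end Phase

variable {d : ℕ}

instance : (volume : Measure (PhS d)).IsAddHaarMeasure :=
  Measure.prod.instIsAddHaarMeasure _ _

section SymplForm

lemma symplForm_add_left (X Y Z : PhS d) :
    symplForm (X + Y) Z = symplForm X Z + symplForm Y Z := by
  simp only [symplForm, Prod.fst_add, Prod.snd_add, inner_add_left, inner_add_right]
  ring

lemma symplForm_add_right (X Y Z : PhS d) :
    symplForm X (Y + Z) = symplForm X Y + symplForm X Z := by
  simp only [symplForm, Prod.fst_add, Prod.snd_add, inner_add_left, inner_add_right]
  ring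

lemma symplForm_neg_left (X Y : PhS d) : symplForm (-X) Y = -symplForm X Y := by
  simp only [symplForm, Prod.fst_neg, Prod.snd_neg, inner_neg_left, inner_neg_right]
  ring

lemma symplForm_sub_left (X Y Z : PhS d) :
    symplForm (X - Y) Z = symplForm X Z - symplForm Y Z := by
  rw [sub_eq_add_neg, symplForm_add_left, symplForm_neg_left, sub_eq_add_neg]

lemma symplForm_swap (X Y : PhS d) : symplForm Y X = -symplForm X Y := by
  simp only [symplForm]
  ring

lemma symplForm_sub_right (X Y Z : PhS d) :
    symplForm X (Y - Z) = symplForm X Y - symplForm X Z := by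
  rw [symplForm_swap (Y - Z), symplForm_sub_left, symplForm_swap X, symplForm_swap X]
  ring

@[fun_prop]
lemma continuous_symplForm {T : Type*} [TopologicalSpace T] {f g : T → PhS d}
    (hf : Continuous f) (hg : Continuous g) : Continuous fun t ↦ symplForm (f t) (g t) := by
  unfold symplForm
  fun_prop

end SymplForm

section FourierInversion

lemma symplFT_eq_integral_phase (a : PhS d → ℂ) (X : PhS d) :
    symplFT d a X = ((Real.pi : ℂ) ^ d)⁻¹ * ∫ Y, a Y * phase (symplForm X Y) := rfl

/-- The linear isomorphism `(x, ξ) ↦ π⁻¹ (-ξ, x)` onto the Euclidean space `ℝ^{2d}`. It represents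
`-σ / π` by the Euclidean inner product, so that `e^{2iσ(X,Y)}` is the standard Fourier kernel at
frequency `symplDual d X`. The target is `WithLp 2` because `PhS d` carries the sup norm. -/
def symplDual (d : ℕ) : PhS d ≃L[ℝ] WithLp 2 (PhS d) :=
  ((ContinuousLinearEquiv.prodComm ℝ _ _).trans
    ((ContinuousLinearEquiv.neg ℝ).prodCongr (.refl ℝ _))).trans
  ((ContinuousLinearEquiv.smulLeft (Units.mk0 Real.pi⁻¹ (inv_ne_zero Real.pi_ne_zero))).trans
    (WithLp.prodContinuousLinearEquiv 2 ℝ _ _).symm)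

lemma symplDual_apply (X : PhS d) :
    symplDual d X = WithLp.toLp 2 (Real.pi⁻¹ • ((-X.2, X.1) : PhS d)) := rfl

lemma pi_mul_inner_toLp_symplDual (X Y : PhS d) :
    Real.pi * ⟪WithLp.toLp 2 Y, symplDual d X⟫ = -symplForm X Y := by
  rw [symplDual_apply, WithLp.prod_inner_apply]
  simp only [symplForm, Prod.smul_fst, Prod.smul_snd, inner_smul_right, inner_neg_right,
    real_inner_comm X.1 Y.2]
  field_simp
  ring

lemma map_symplDual_volume :
    Measure.map (symplDual d) volume = ENNReal.ofReal (Real.pi ^ (2 * d)) • volume := by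
  have hrot : MeasurePreserving (fun X : PhS d ↦ ((-X.2, X.1) : PhS d)) volume volume :=
    ((Measure.measurePreserving_neg volume).prod (.id volume)).comp Measure.measurePreserving_swap
  have htoLp := WithLp.volume_preserving_toLp (EuclideanSpace ℝ (Fin d)) (EuclideanSpace ℝ (Fin d))
  have hscale : Measure.map (fun X : PhS d ↦ Real.pi⁻¹ • X) volume =
      ENNReal.ofReal (Real.pi ^ (2 * d)) • volume := by
    rw [Measure.map_addHaar_smul volume (inv_ne_zero Real.pi_ne_zero), inv_pow, inv_inv,
      abs_of_pos (by positivity), Module.finrank_prod, finrank_euclideanSpace_fin, two_mul]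
  calc Measure.map (symplDual d) volume
      = Measure.map (WithLp.toLp 2) (Measure.map (fun X : PhS d ↦ Real.pi⁻¹ • X)
          (Measure.map (fun X : PhS d ↦ ((-X.2, X.1) : PhS d)) volume)) := by
        rw [Measure.map_map (measurable_const_smul _) hrot.measurable,
          Measure.map_map htoLp.measurable (by fun_prop)]
        rfl
    _ = ENNReal.ofReal (Real.pi ^ (2 * d)) • volume := by
        rw [hrot.map_eq, hscale, Measure.map_smul, htoLp.map_eq]

lemma integral_comp_symplDual (f : WithLp 2 (PhS d) → ℂ) :
    ∫ X, f (symplDual d X) = (Real.pi : ℂ) ^ (2 * d) * ∫ v, f v := by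
  have hemb : MeasurableEmbedding (symplDual d) := (symplDual d).toHomeomorph.measurableEmbedding
  rw [← hemb.integral_map f, map_symplDual_volume, integral_smul_measure,
    ENNReal.toReal_ofReal (by positivity), Complex.real_smul, Complex.ofReal_pow]

lemma integrable_comp_symplDual_iff {f : WithLp 2 (PhS d) → ℂ} :
    Integrable (fun X ↦ f (symplDual d X)) ↔ Integrable f := by
  have hemb : MeasurableEmbedding (symplDual d) := (symplDual d).toHomeomorph.measurableEmbedding
  have hpi : ENNReal.ofReal (Real.pi ^ (2 * d)) ≠ 0 := by positivity
  rw [← integrable_smul_measure (f := f) hpi ENNReal.ofReal_ne_top, ← map_symplDual_volume,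
    hemb.integrable_map_iff, Function.comp_def]

lemma symplFT_eq_fourier (a : PhS d → ℂ) (X : PhS d) :
    symplFT d a X =
      ((Real.pi : ℂ) ^ d)⁻¹ * 𝓕 (fun v : WithLp 2 (PhS d) ↦ a v.ofLp) (symplDual d X) := by
  rw [symplFT, Real.fourier_eq',
    ← (WithLp.volume_preserving_toLp _ _).integral_comp
      (MeasurableEquiv.toLp 2 (PhS d)).measurableEmbedding]
  congr! 3
  rw [smul_eq_mul, mul_comm, mul_assoc (-2), pi_mul_inner_toLp_symplDual]
  congr 2
  push_cast
  ring

lemma integrable_symplFT_iff {a : PhS d → ℂ} :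
    Integrable (symplFT d a) ↔ Integrable (𝓕 fun v : WithLp 2 (PhS d) ↦ a v.ofLp) := by
  rw [← integrable_comp_symplDual_iff, funext (symplFT_eq_fourier a)]
  exact integrable_const_mul_iff (by simp [Real.pi_ne_zero]) _

theorem symplFT_symplFT {a : PhS d → ℂ} {X : PhS d} (ha : Integrable a)
    (hFa : Integrable (symplFT d a)) (hX : ContinuousAt a X) :
    symplFT d (symplFT d a) X = a X := by
  let f : WithLp 2 (PhS d) → ℂ := fun v ↦ a v.ofLp
  have hf : Integrable f :=
    (WithLp.volume_preserving_ofLp _ _).integrable_comp_of_integrable ha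
  have hinv : 𝓕⁻ (𝓕 f) (WithLp.toLp 2 X) = a X :=
    hf.fourierInv_fourier_eq (integrable_symplFT_iff.1 hFa)
      (ContinuousAt.comp (g := a) hX (WithLp.prod_continuous_ofLp 2 _ _).continuousAt)
  have hkernel (Y : PhS d) : symplFT d a Y * phase (symplForm X Y) =
      ((Real.pi : ℂ) ^ d)⁻¹ * (Complex.exp
        (↑(2 * Real.pi * ⟪symplDual d Y, WithLp.toLp 2 X⟫) * Complex.I) •
          𝓕 f (symplDual d Y)) := by
    rw [symplFT_eq_fourier, real_inner_comm, mul_assoc 2, pi_mul_inner_toLp_symplDual,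
      symplForm_swap X Y, neg_neg, phase, smul_eq_mul, mul_assoc, mul_comm (𝓕 f _)]
    push_cast
    ring_nf
  simp only [symplFT_eq_integral_phase _ X, hkernel]
  rw [integral_const_mul, integral_comp_symplDual
    (fun v ↦ Complex.exp (↑(2 * Real.pi * ⟪v, WithLp.toLp 2 X⟫) * Complex.I) • 𝓕 f v),
    ← Real.fourierInv_eq', hinv, two_mul, pow_add]
  field [Real.pi_ne_zero]

lemma integrable_symplFT (a : SchwartzMap (PhS d) ℂ) : Integrable (symplFT d a) := by
  let f : SchwartzMap (WithLp 2 (PhS d)) ℂ :=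
    SchwartzMap.compCLMOfContinuousLinearEquiv ℂ (WithLp.prodContinuousLinearEquiv 2 ℝ _ _) a
  have hf : Integrable (𝓕 (f : WithLp 2 (PhS d) → ℂ)) := by
    rw [← SchwartzMap.fourier_coe]
    exact (𝓕 f).integrable
  exact integrable_symplFT_iff.2 hf

end FourierInversion

section STFT

lemma symplSTFT_eq_integral_phase (Φ a : PhS d → ℂ) (X Y : PhS d) :
    symplSTFT d Φ a X Y =
      ((Real.pi : ℂ) ^ d)⁻¹ * ∫ Z, a Z * conj (Φ (Z - X)) * phase (symplForm Y Z) := rfl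

lemma integral_symplFT_mul {a b : PhS d → ℂ} (ha : Integrable a) (hb : Integrable b) :
    ∫ X, symplFT d a X * b X = ∫ Y, a Y * symplFT d b (-Y) := by
  have hint_prod : Integrable (Function.uncurry fun X Y : PhS d ↦ b X * a Y * phase (symplForm X Y))
      (volume.prod volume) :=
    (hb.mul_prod ha).mul_bdd (c := 1) (by fun_prop)
      (.of_forall fun p ↦ (norm_phase _).le)
  calc ∫ X, symplFT d a X * b X
      = ((Real.pi : ℂ) ^ d)⁻¹ * ∫ X, ∫ Y, b X * a Y * phase (symplForm X Y) := by
        rw [← integral_const_mul]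
        congr 1 with X
        rw [symplFT_eq_integral_phase, mul_assoc, ← integral_mul_const]
        congr 2 with Y
        ring
    _ = ((Real.pi : ℂ) ^ d)⁻¹ * ∫ Y, ∫ X, b X * a Y * phase (symplForm X Y) := by
        rw [integral_integral_swap hint_prod]
    _ = ∫ Y, a Y * symplFT d b (-Y) := by
        rw [← integral_const_mul]
        congr 1 with Y
        rw [symplFT_eq_integral_phase, mul_left_comm, ← integral_const_mul (a Y)]
        congr 2 with X
        rw [symplForm_neg_left, ← symplForm_swap]
        ring

lemma symplFT_conj_translate_mul_phase (Φ : PhS d → ℂ) (X Y Z : PhS d) :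
    symplFT d (fun V ↦ conj (Φ (V - X)) * phase (symplForm Y V)) (-Z) =
      phase (symplForm Y X) * (conj (symplFT d Φ (Z - Y)) * phase (symplForm X Z)) := by
  have hphase (V : PhS d) : symplForm Y (V + X) + symplForm (-Z) (V + X) =
      symplForm Y X + (-symplForm (Z - Y) V + symplForm X Z) := by
    simp only [symplForm_add_right, symplForm_neg_left, symplForm_sub_left, symplForm_swap Z X]
    ring
  calc symplFT d (fun V ↦ conj (Φ (V - X)) * phase (symplForm Y V)) (-Z)
      = ((Real.pi : ℂ) ^ d)⁻¹ *
          ∫ V, conj (Φ V) * phase (symplForm Y (V + X) + symplForm (-Z) (V + X)) := by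
        rw [symplFT_eq_integral_phase, ← integral_add_right_eq_self _ X]
        simp only [add_sub_cancel_right, phase_add, ← mul_assoc]
    _ = phase (symplForm Y X) * (conj (symplFT d Φ (Z - Y)) * phase (symplForm X Z)) := by
        rw [symplFT_eq_integral_phase, map_mul, ← integral_conj, mul_assoc, mul_left_comm,
          ← integral_mul_const, ← integral_const_mul (phase _)]
        simp only [hphase, phase_add, map_mul, conj_phase, map_inv₀, map_pow, Complex.conj_ofReal]
        congr 2 with V
        ring

lemma symplSTFT_symplFT {Φ b : PhS d → ℂ} (hΦ : Integrable Φ) (hb : Integrable b) (X Y : PhS d) :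
    symplSTFT d Φ (symplFT d b) X Y =
      phase (symplForm Y X) * symplSTFT d (symplFT d Φ) b Y X := by
  have hg : Integrable fun V ↦ conj (Φ (V - X)) * phase (symplForm Y V) :=
    (Complex.conjLIE.integrable_comp_iff.2 (hΦ.comp_sub_right X)).mul_bdd (c := 1) (by fun_prop)
      (.of_forall fun V ↦ (norm_phase _).le)
  calc symplSTFT d Φ (symplFT d b) X Y
      = ((Real.pi : ℂ) ^ d)⁻¹ *
          ∫ V, symplFT d b V * (conj (Φ (V - X)) * phase (symplForm Y V)) := by
        simp only [symplSTFT_eq_integral_phase, mul_assoc]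
    _ = phase (symplForm Y X) * symplSTFT d (symplFT d Φ) b Y X := by
        rw [integral_symplFT_mul hb hg, symplSTFT_eq_integral_phase, mul_left_comm,
          ← integral_const_mul (phase _)]
        simp only [symplFT_conj_translate_mul_phase]
        congr 2 with Z
        ring

end STFT

section WeylProduct

lemma weylProd_eq_integral (a b : PhS d → ℂ) (X : PhS d) :
    weylProd d a b X =
      ((Real.pi : ℂ) ^ d)⁻¹ * ∫ Y, a (X - Y) * symplFT d b Y * phase (symplForm X Y) := by
  have hconst : (2 * Real.pi) ^ (-(d : ℝ) / 2) * (2 / Real.pi) ^ ((d : ℝ) / 2) =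
      (Real.pi ^ d)⁻¹ := by
    rw [neg_div, Real.rpow_neg (by positivity), ← Real.inv_rpow (by positivity),
      ← Real.mul_rpow (by positivity) (by positivity)]
    have hsq : (2 * Real.pi)⁻¹ * (2 / Real.pi) = (Real.pi⁻¹) ^ (2 : ℝ) := by
      rw [Real.rpow_two]
      field
    rw [hsq, ← Real.rpow_mul (by positivity), mul_div_cancel₀ _ two_ne_zero, Real.rpow_natCast,
      inv_pow]
  rw [weylProd, twistConv, ← mul_assoc, ← Complex.ofReal_mul, hconst]
  push_cast
  rfl

/-- The integrand `K((Z, Y), P)` common to both sides of the STFT formula; `b` and `Q` stand for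
`F_σ a₂` and `F_σ Φ₂`. -/
def weylKernel (Φ Q a b : PhS d → ℂ) (X₀ X₂ : PhS d) (p : (PhS d × PhS d) × PhS d) : ℂ :=
  b p.1.2 * a (p.1.1 - p.1.2) * conj (Q p.2) *
    (conj (Φ (p.1.1 - (X₂ + X₀) - p.2)) *
      phase (symplForm p.1.1 p.1.2 - symplForm (p.1.1 - (X₂ + X₀)) p.2 +
        symplForm (X₂ - X₀) p.1.1))

lemma integrable_weylKernel (Φ : PhS d →ᵇ ℂ) {Q a b : PhS d → ℂ} (hQ : Integrable Q)
    (ha : Integrable a) (hb : Integrable b) (X₀ X₂ : PhS d) :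
    Integrable (weylKernel Φ Q a b X₀ X₂) ((volume.prod volume).prod volume) := by
  have hconv : Integrable (fun q : PhS d × PhS d ↦ b q.2 * a (q.1 - q.2)) (volume.prod volume) :=
    hb.convolution_integrand (ContinuousLinearMap.mul ℂ ℂ) ha
  refine (hconv.mul_prod (Complex.conjLIE.integrable_comp_iff.2 hQ)).mul_bdd (c := ‖Φ‖) ?_ ?_
  · fun_prop
  · refine .of_forall fun p ↦ ?_
    rw [norm_mul, norm_phase, mul_one, RCLike.norm_conj]
    exact Φ.norm_coe_le_norm _

lemma symplSTFT_weylProd_eq_integral_weylKernel (Φ₁ Φ₂ a₁ a₂ : PhS d → ℂ) (X₀ X₂ : PhS d) :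
    symplSTFT d (fun Z ↦ (Real.pi : ℂ) ^ d * weylProd d Φ₁ Φ₂ Z) (weylProd d a₁ a₂)
        (X₂ + X₀) (X₂ - X₀) =
      ((Real.pi : ℂ) ^ d)⁻¹ * ((Real.pi : ℂ) ^ d)⁻¹ *
        ∫ Z, ∫ Y, ∫ P, weylKernel Φ₁ (symplFT d Φ₂) a₁ (symplFT d a₂) X₀ X₂ ((Z, Y), P) := by
  have hpi : (Real.pi : ℂ) ^ d ≠ 0 := by simp [Real.pi_ne_zero]
  rw [symplSTFT_eq_integral_phase, mul_assoc, ← integral_const_mul (_)⁻¹ fun Z ↦ ∫ Y, _]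
  simp only [weylProd_eq_integral, mul_inv_cancel_left₀ hpi, ← integral_conj]
  congr 2 with Z
  rw [mul_assoc, mul_assoc, ← integral_mul_const]
  congr 2 with Y
  rw [← integral_mul_const, ← integral_const_mul]
  congr 1 with P
  simp only [weylKernel, map_mul, conj_phase, phase_add,
    sub_eq_add_neg (symplForm Z Y)]
  ring

lemma weylKernel_phase_shear (X₀ X₁ X₂ U Y : PhS d) :
    symplForm (U + Y) Y - symplForm (U + Y - (X₂ + X₀)) (X₁ + (Y - X₂)) +
        symplForm (X₂ - X₀) (U + Y) =
      symplForm (X₁ - X₀) (X₂ - X₀) + symplForm (X₂ - X₁) (X₂ + X₁) +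
        (symplForm (X₁ - X₀) U + symplForm (X₂ + X₁) Y) := by
  simp only [symplForm_add_left, symplForm_add_right, symplForm_sub_left, symplForm_sub_right]
  simp only [symplForm]
  ring

lemma phase_mul_symplSTFT_mul_symplSTFT_eq_integral_weylKernel (Φ Q a b : PhS d → ℂ)
    (X₀ X₁ X₂ : PhS d) :
    phase (symplForm (X₁ - X₀) (X₂ - X₀)) * symplSTFT d Φ a (X₁ + X₀) (X₁ - X₀) *
        (phase (symplForm (X₂ - X₁) (X₂ + X₁)) * symplSTFT d Q b (X₂ - X₁) (X₂ + X₁)) =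
      ((Real.pi : ℂ) ^ d)⁻¹ * ((Real.pi : ℂ) ^ d)⁻¹ *
        ∫ q : PhS d × PhS d, weylKernel Φ Q a b X₀ X₂ ((q.1 + q.2, q.2), X₁ + (q.2 - X₂)) := by
  have hprod : (∫ U, a U * conj (Φ (U - (X₁ + X₀))) * phase (symplForm (X₁ - X₀) U)) *
        ∫ Y, b Y * conj (Q (Y - (X₂ - X₁))) * phase (symplForm (X₂ + X₁) Y) =
      ∫ q : PhS d × PhS d, a q.1 * conj (Φ (q.1 - (X₁ + X₀))) * phase (symplForm (X₁ - X₀) q.1) *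
        (b q.2 * conj (Q (q.2 - (X₂ - X₁))) * phase (symplForm (X₂ + X₁) q.2)) :=
    (integral_prod_mul _ _).symm
  have hkernel (q : PhS d × PhS d) :
      weylKernel Φ Q a b X₀ X₂ ((q.1 + q.2, q.2), X₁ + (q.2 - X₂)) =
        phase (symplForm (X₁ - X₀) (X₂ - X₀)) * phase (symplForm (X₂ - X₁) (X₂ + X₁)) *
          (a q.1 * conj (Φ (q.1 - (X₁ + X₀))) * phase (symplForm (X₁ - X₀) q.1) *
            (b q.2 * conj (Q (q.2 - (X₂ - X₁))) * phase (symplForm (X₂ + X₁) q.2))) := by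
    have hΦ : q.1 + q.2 - (X₂ + X₀) - (X₁ + (q.2 - X₂)) = q.1 - (X₁ + X₀) := by abel
    have hQ : X₁ + (q.2 - X₂) = q.2 - (X₂ - X₁) := by abel
    simp only [weylKernel, weylKernel_phase_shear, hΦ, add_sub_cancel_right]
    simp only [phase_add, hQ]
    ring
  simp only [hkernel]
  rw [integral_const_mul, ← hprod]
  simp only [symplSTFT_eq_integral_phase]
  ring

end WeylProduct

theorem symplSTFT_weylProd_formula_general (Φ₁ : PhS d →ᵇ ℂ) {Φ₂ a₁ a₂ : PhS d → ℂ}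
    (hΦ₂ : Integrable Φ₂) (hFΦ₂ : Integrable (symplFT d Φ₂)) (ha₁ : Integrable a₁)
    (ha₂_cont : Continuous a₂) (ha₂ : Integrable a₂) (hFa₂ : Integrable (symplFT d a₂))
    (X₀ X₂ : PhS d) :
    symplSTFT d (fun Z ↦ (Real.pi : ℂ) ^ d * weylProd d Φ₁ Φ₂ Z) (weylProd d a₁ a₂)
        (X₂ + X₀) (X₂ - X₀) =
      ∫ X₁, phase (symplForm (X₁ - X₀) (X₂ - X₀)) *
        symplSTFT d Φ₁ a₁ (X₁ + X₀) (X₁ - X₀) * symplSTFT d Φ₂ a₂ (X₂ + X₁) (X₂ - X₁) := by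
  have hinv : a₂ = symplFT d (symplFT d a₂) :=
    funext fun X ↦ (symplFT_symplFT ha₂ hFa₂ ha₂_cont.continuousAt).symm
  have hdual (X Y : PhS d) : symplSTFT d Φ₂ a₂ X Y =
      phase (symplForm Y X) * symplSTFT d (symplFT d Φ₂) (symplFT d a₂) Y X := by
    conv_lhs => rw [hinv]
    exact symplSTFT_symplFT hΦ₂ hFa₂ X Y
  simp only [hdual, phase_mul_symplSTFT_mul_symplSTFT_eq_integral_weylKernel]
  rw [symplSTFT_weylProd_eq_integral_weylKernel, integral_const_mul,
    integral_integral_integral_eq_integral_shear (μ := volume)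
      (integrable_weylKernel Φ₁ hFΦ₂ ha₁ hFa₂ X₀ X₂) X₂]
  rfl

/-- Lemma 2.1 (case `N = 2`): the symplectic STFT of a Weyl product of two
Schwartz functions, with window `Φ₀ = π^d Φ₁ # Φ₂`, is given by a twisted
integral of the STFTs of the factors. -/
theorem symplSTFT_weylProd_formula
    (d : ℕ) (hd : 1 ≤ d) (Φ₁ Φ₂ a₁ a₂ : SchwartzMap (PhS d) ℂ)
    (Φ₀ : PhS d → ℂ) (hΦ₀ : Φ₀ = fun Z => ((Real.pi : ℂ) ^ d) * weylProd d (⇑Φ₁) (⇑Φ₂) Z)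
    (a₀ : PhS d → ℂ) (ha₀ : a₀ = weylProd d (⇑a₁) (⇑a₂)) :
    ∀ X₀ X₂ : PhS d,
      symplSTFT d Φ₀ a₀ (X₂ + X₀) (X₂ - X₀) =
        ∫ X₁ : PhS d,
          Complex.exp (2 * Complex.I * (symplForm (X₁ - X₀) (X₂ - X₀) : ℂ)) *
            symplSTFT d (⇑Φ₁) (⇑a₁) (X₁ + X₀) (X₁ - X₀) *
            symplSTFT d (⇑Φ₂) (⇑a₂) (X₂ + X₁) (X₂ - X₁) := by
  subst hΦ₀ ha₀
  exact symplSTFT_weylProd_formula_general Φ₁.toBoundedContinuousFunction Φ₂.integrable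
    (integrable_symplFT Φ₂) a₁.integrable a₂.continuous a₂.integrable (integrable_symplFT a₂)

end
end

section
/- Let d ≥ 1, N ≥ 2, and let ω₀, …, ω_N ∈ 𝒫_E(ℝ^{2d}×ℝ^{2d}) satisfy the Weyl weight condition. Then there exist a weight ϑ ∈ 𝒫_E(ℝ^{2d}×ℝ^{2d}) and a constant C > 0 such that: (i) ϑ(X₁+X₀, X₁−X₀) ≤ C ω₀(X₂+X₀, X₂−X₀) ω_N(X₂+X₁, X₂−X₁) for all X₀, X₁, X₂ ∈ ℝ^{2d}, and (ii) 1 ≤ C ϑ(X_{N−1}+X₀, X_{N−1}−X₀) ∏_{j=1}^{N−1} ω_j(X_j+X_{j−1}, X_j−X_{j−1}) for all X₀, …, X_{N−1} ∈ ℝ^{2d}. -/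
open MeasureTheory Filter
open scoped ENNReal RealInnerProductSpace BigOperators

noncomputable section

/-!
Put `ϑ(X₁ + X₀, X₁ - X₀) = inf_Z ω₀(Z + X₀, Z - X₀) ω_N(Z + X₁, Z - X₁)`. The first inequality is
then immediate, and the second is the infimum over `X_N = Z` of the Weyl weight condition. As a
function of `(X₁ + X₀, X₁ - X₀)` and `Z`, the product under the infimum consists of moderate weights
composed with Lipschitz maps, so its moderateness estimate is uniform in `Z` and survives the
infimum. Such an estimate also propagates positivity from one point to all others, and positivity
at the origin follows from the second inequality for the constant chain `X ≡ 0`.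
-/

namespace IsModerateWeight

variable {E F : Type*} [NormedAddCommGroup E] [NormedAddCommGroup F]

theorem of_add_le {ω : E → ℝ} {C c : ℝ} {x₀ : E} (hC : 0 < C) (hx₀ : 0 < ω x₀)
    (hω : ∀ x y, ω (x + y) ≤ C * ω x * Real.exp (c * ‖y‖)) : IsModerateWeight ω := by
  have hpos (x : E) : 0 < ω x := by
    have hx : 0 < C * ω x * Real.exp (c * ‖x₀ - x‖) :=
      hx₀.trans_le (by simpa only [add_sub_cancel] using hω x (x₀ - x))
    exact pos_of_mul_pos_right (pos_of_mul_pos_left hx (Real.exp_pos _).le) hC.le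
  have hmod (x y : E) : ω (x + y) ≤ C * ω x * Real.exp ((|c| + 1) * ‖y‖) := by
    have hωx := hpos x
    refine (hω x y).trans ?_
    gcongr
    exact (le_abs_self c).trans (le_add_of_nonneg_right zero_le_one)
  refine ⟨hpos, fun r => ⟨C * ω 0 * Real.exp ((|c| + 1) * r), fun x hx => ?_⟩,
    C, |c| + 1, hC, by positivity, hmod⟩
  have hω0 := hpos 0
  calc ω x = ω (0 + x) := by rw [zero_add]
    _ ≤ C * ω 0 * Real.exp ((|c| + 1) * ‖x‖) := hmod 0 x
    _ ≤ C * ω 0 * Real.exp ((|c| + 1) * r) := by gcongr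

theorem comp_lipschitzWith {ω : F → ℝ} {f : E → F} {K : NNReal} (hω : IsModerateWeight ω)
    (hf : LipschitzWith K f) : IsModerateWeight fun x => ω (f x) := by
  obtain ⟨hpos, -, C, c, hC, hc, hmod⟩ := hω
  refine of_add_le (x₀ := 0) (c := c * K) hC (hpos _) fun x y => ?_
  have hnorm : ‖f (x + y) - f x‖ ≤ K * ‖y‖ := by
    simpa only [add_sub_cancel_left] using hf.norm_sub_le (x + y) x
  have hωfx := hpos (f x)
  calc ω (f (x + y)) = ω (f x + (f (x + y) - f x)) := by rw [add_sub_cancel]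
    _ ≤ C * ω (f x) * Real.exp (c * ‖f (x + y) - f x‖) := hmod _ _
    _ ≤ C * ω (f x) * Real.exp (c * K * ‖y‖) := by
      rw [mul_assoc c]
      gcongr

theorem mul {ω₁ ω₂ : E → ℝ} (h₁ : IsModerateWeight ω₁) (h₂ : IsModerateWeight ω₂) :
    IsModerateWeight fun x => ω₁ x * ω₂ x := by
  obtain ⟨hpos₁, -, C₁, c₁, hC₁, -, hmod₁⟩ := h₁
  obtain ⟨hpos₂, -, C₂, c₂, hC₂, -, hmod₂⟩ := h₂
  refine of_add_le (x₀ := 0) (c := c₁ + c₂) (mul_pos hC₁ hC₂) (mul_pos (hpos₁ 0) (hpos₂ 0))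
    fun x y => ?_
  have hω₁x := hpos₁ x
  calc ω₁ (x + y) * ω₂ (x + y)
      ≤ (C₁ * ω₁ x * Real.exp (c₁ * ‖y‖)) * (C₂ * ω₂ x * Real.exp (c₂ * ‖y‖)) :=
        mul_le_mul (hmod₁ x y) (hmod₂ x y) (hpos₂ _).le (by positivity)
    _ = C₁ * C₂ * (ω₁ x * ω₂ x) * Real.exp ((c₁ + c₂) * ‖y‖) := by
        rw [add_mul, Real.exp_add]
        ring

theorem iInf_snd {ω : E × F → ℝ} {x₀ : E} (hω : IsModerateWeight ω)
    (hx₀ : 0 < ⨅ z, ω (x₀, z)) : IsModerateWeight fun x => ⨅ z, ω (x, z) := by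
  obtain ⟨hpos, -, C, c, hC, -, hmod⟩ := hω
  refine of_add_le (c := c) hC hx₀ fun x y => ?_
  have hbdd : BddBelow (Set.range fun z => ω (x + y, z)) :=
    ⟨0, Set.forall_mem_range.2 fun z => (hpos _).le⟩
  rw [mul_right_comm, Real.mul_iInf_of_nonneg (by positivity)]
  refine ciInf_mono hbdd fun z => ?_
  simpa [mul_right_comm] using hmod (x, z) (y, 0)

end IsModerateWeight

theorem one_le_mul_iInf_mul {ι : Type*} [Nonempty ι] {f : ι → ℝ} {a b : ℝ} (hf : ∀ i, 0 ≤ f i)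
    (h : ∀ i, 1 ≤ a * f i * b) : 1 ≤ a * (⨅ i, f i) * b := by
  have hab : 0 ≤ a * b := by
    obtain ⟨i⟩ := ‹Nonempty ι›
    have hi : 0 < a * b * f i := by linarith [h i, mul_right_comm a (f i) b]
    exact (pos_of_mul_pos_left hi (hf i)).le
  rw [mul_right_comm, Real.mul_iInf_of_nonneg hab]
  exact le_ciInf fun i => (h i).trans_eq (mul_right_comm _ _ _)

theorem prod_snoc_castSucc_succ {E M : Type*} [CommMonoid M] {N : ℕ}
    (g : Fin (N + 1) → E → E → M) (X : Fin (N + 1) → E) (Z : E) :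
    ∏ j : Fin (N + 1), g j (Fin.snoc (α := fun _ => E) X Z j.castSucc)
        (Fin.snoc (α := fun _ => E) X Z j.succ) =
      (∏ j : Fin N, g j.castSucc (X j.castSucc) (X j.succ)) *
        g (Fin.last N) (X (Fin.last N)) Z := by
  simp only [Fin.prod_univ_castSucc, Fin.succ_castSucc, Fin.snoc_castSucc, Fin.succ_last,
    Fin.snoc_last]

section IntermediateWeight

variable {E : Type*} [AddCommGroup E] [Module ℝ E] {α β : E × E → ℝ}

/-- The largest function `ϑ` with
`ϑ(X₁ + X₀, X₁ - X₀) ≤ α(Z + X₀, Z - X₀) β(Z + X₁, Z - X₁)` for all `X₀`, `X₁`, `Z`, where `α`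
and `β` are nonnegative. The points `X₀` and `X₁` are recovered from `A = (X₁ + X₀, X₁ - X₀)` as
`(A.1 - A.2) / 2` and `(A.1 + A.2) / 2`. -/
def intermediateWeight (α β : E × E → ℝ) (A : E × E) : ℝ :=
  ⨅ Z : E, α (Z + (2⁻¹ : ℝ) • (A.1 - A.2), Z - (2⁻¹ : ℝ) • (A.1 - A.2)) *
    β (Z + (2⁻¹ : ℝ) • (A.1 + A.2), Z - (2⁻¹ : ℝ) • (A.1 + A.2))

theorem intermediateWeight_add_sub (α β : E × E → ℝ) (X₀ X₁ : E) :
    intermediateWeight α β (X₁ + X₀, X₁ - X₀) =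
      ⨅ Z : E, α (Z + X₀, Z - X₀) * β (Z + X₁, Z - X₁) := by
  have hX₀ : (2⁻¹ : ℝ) • ((X₁ + X₀) - (X₁ - X₀)) = X₀ := by module
  have hX₁ : (2⁻¹ : ℝ) • ((X₁ + X₀) + (X₁ - X₀)) = X₁ := by module
  simp only [intermediateWeight, hX₀, hX₁]

theorem intermediateWeight_add_sub_le (hα : ∀ A, 0 ≤ α A) (hβ : ∀ A, 0 ≤ β A) (X₀ X₁ Z : E) :
    intermediateWeight α β (X₁ + X₀, X₁ - X₀) ≤ α (Z + X₀, Z - X₀) * β (Z + X₁, Z - X₁) := by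
  rw [intermediateWeight_add_sub]
  exact ciInf_le ⟨0, Set.forall_mem_range.2 fun Z => mul_nonneg (hα _) (hβ _)⟩ Z

theorem one_le_mul_intermediateWeight_mul_prod {N : ℕ} {ω : Fin (N + 2) → E × E → ℝ} {C : ℝ}
    (hω_zero : ∀ A, 0 ≤ ω 0 A) (hω_last : ∀ A, 0 ≤ ω (Fin.last (N + 1)) A)
    (hω_chain : ∀ X : Fin (N + 2) → E,
      1 ≤ C * ω 0 (X (Fin.last (N + 1)) + X 0, X (Fin.last (N + 1)) - X 0) *
        ∏ j : Fin (N + 1), ω j.succ (X j.succ + X j.castSucc, X j.succ - X j.castSucc))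
    (X : Fin (N + 1) → E) :
    1 ≤ C * intermediateWeight (ω 0) (ω (Fin.last (N + 1)))
          (X (Fin.last N) + X 0, X (Fin.last N) - X 0) *
        ∏ j : Fin N, ω j.succ.castSucc (X j.succ + X j.castSucc, X j.succ - X j.castSucc) := by
  rw [intermediateWeight_add_sub]
  refine one_le_mul_iInf_mul (fun Z => mul_nonneg (hω_zero _) (hω_last _)) fun Z => ?_
  refine (hω_chain (Fin.snoc (α := fun _ => E) X Z)).trans_eq ?_
  rw [prod_snoc_castSucc_succ (fun j Y₀ Y₁ => ω j.succ (Y₁ + Y₀, Y₁ - Y₀)), Fin.snoc_last,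
    ← Fin.castSucc_zero, Fin.snoc_castSucc]
  simp only [Fin.succ_castSucc, Fin.succ_last, Fin.castSucc_zero]
  ring

end IntermediateWeight

theorem IsModerateWeight.intermediateWeight {E : Type*} [NormedAddCommGroup E]
    [NormedSpace ℝ E] {α β : E × E → ℝ} {A₀ : E × E} (hα : IsModerateWeight α)
    (hβ : IsModerateWeight β) (hA₀ : 0 < intermediateWeight α β A₀) :
    IsModerateWeight (intermediateWeight α β) := by
  let A : (E × E) × E →L[ℝ] E × E := .fst ℝ (E × E) E
  let Z : (E × E) × E →L[ℝ] E := .snd ℝ (E × E) E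
  let x₀ : (E × E) × E →L[ℝ] E := (2⁻¹ : ℝ) • ((.fst ℝ E E - .snd ℝ E E) ∘L A)
  let x₁ : (E × E) × E →L[ℝ] E := (2⁻¹ : ℝ) • ((.fst ℝ E E + .snd ℝ E E) ∘L A)
  exact ((hα.comp_lipschitzWith ((Z + x₀).prod (Z - x₀)).lipschitz).mul
    (hβ.comp_lipschitzWith ((Z + x₁).prod (Z - x₁)).lipschitz)).iInf_snd hA₀

theorem exists_intermediate_weight_general {E : Type*} [NormedAddCommGroup E] [NormedSpace ℝ E]
    {N : ℕ} {ω : Fin (N + 2) → E × E → ℝ} (hω_zero : IsModerateWeight (ω 0))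
    (hω_last : IsModerateWeight (ω (Fin.last (N + 1))))
    (hω_chain : ∃ C : ℝ, 0 < C ∧ ∀ X : Fin (N + 2) → E,
      1 ≤ C * ω 0 (X (Fin.last (N + 1)) + X 0, X (Fin.last (N + 1)) - X 0) *
        ∏ j : Fin (N + 1), ω j.succ (X j.succ + X j.castSucc, X j.succ - X j.castSucc)) :
    ∃ (ϑ : E × E → ℝ) (C : ℝ), IsModerateWeight ϑ ∧ 0 < C ∧
      (∀ X₀ X₁ X₂ : E,
        ϑ (X₁ + X₀, X₁ - X₀) ≤
          C * ω 0 (X₂ + X₀, X₂ - X₀) * ω (Fin.last (N + 1)) (X₂ + X₁, X₂ - X₁)) ∧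
      (∀ X : Fin (N + 1) → E,
        1 ≤ C * ϑ (X (Fin.last N) + X 0, X (Fin.last N) - X 0) *
          ∏ j : Fin N, ω j.succ.castSucc
            (X j.succ + X j.castSucc, X j.succ - X j.castSucc)) := by
  obtain ⟨C, hC, hchain⟩ := hω_chain
  let ϑ := intermediateWeight (ω 0) (ω (Fin.last (N + 1)))
  have hϑ_nonneg (A : E × E) : 0 ≤ ϑ A :=
    Real.iInf_nonneg fun Z => (mul_pos (hω_zero.1 _) (hω_last.1 _)).le
  have hϑ_chain (X : Fin (N + 1) → E) := one_le_mul_intermediateWeight_mul_prod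
    (fun A => (hω_zero.1 A).le) (fun A => (hω_last.1 A).le) hchain X
  have hϑ_zero : ϑ (0, 0) ≠ 0 := by
    simpa using right_ne_zero_of_mul (left_ne_zero_of_mul (zero_lt_one.trans_le (hϑ_chain 0)).ne')
  refine ⟨ϑ, max C 1, hω_zero.intermediateWeight hω_last ((hϑ_nonneg _).lt_of_ne' hϑ_zero),
    lt_max_of_lt_left hC, fun X₀ X₁ X₂ => ?_, fun X => ?_⟩
  · have hω_mul_pos := mul_pos (hω_zero.1 (X₂ + X₀, X₂ - X₀)) (hω_last.1 (X₂ + X₁, X₂ - X₁))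
    rw [mul_assoc]
    exact (intermediateWeight_add_sub_le (fun A => (hω_zero.1 A).le) (fun A => (hω_last.1 A).le)
      X₀ X₁ X₂).trans (le_mul_of_one_le_left hω_mul_pos.le (le_max_right C 1))
  · have h := hϑ_chain X
    rw [mul_assoc] at h ⊢
    have hϑ_mul_pos := pos_of_mul_pos_right (zero_lt_one.trans_le h) hC.le
    exact h.trans (mul_le_mul_of_nonneg_right (le_max_left C 1) hϑ_mul_pos.le)

/-- Lemma (intermediate weights): given moderate weights `ω₀,…,ω_N` satisfying
the Weyl weight condition, there is a moderate weight `ϑ` splitting the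
condition into a bilinear part and an `(N-1)`-linear part. -/
theorem exists_intermediate_weight
    (d N : ℕ) (hd : 1 ≤ d) (hN : 2 ≤ N)
    (ω : Fin (N + 1) → (PhS d × PhS d → ℝ))
    (hω : ∀ j, IsModerateWeight (ω j))
    (hWcond : WeylWeightCond d N ω) :
    ∃ (ϑ : PhS d × PhS d → ℝ) (C : ℝ), IsModerateWeight ϑ ∧ 0 < C ∧
      (∀ X₀ X₁ X₂ : PhS d,
        ϑ (X₁ + X₀, X₁ - X₀) ≤
          C * ω 0 (X₂ + X₀, X₂ - X₀) * ω (Fin.last N) (X₂ + X₁, X₂ - X₁)) ∧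
      (∀ X : Fin N → PhS d,
        1 ≤ C * ϑ (X ⟨N - 1, by omega⟩ + X ⟨0, by omega⟩,
              X ⟨N - 1, by omega⟩ - X ⟨0, by omega⟩) *
            ∏ j : Fin (N - 1),
              ω ⟨j.1 + 1, by have := j.isLt; omega⟩
                (X ⟨j.1 + 1, by have := j.isLt; omega⟩ + X ⟨j.1, by have := j.isLt; omega⟩,
                 X ⟨j.1 + 1, by have := j.isLt; omega⟩ - X ⟨j.1, by have := j.isLt; omega⟩)) := by
  obtain ⟨M, rfl⟩ := Nat.exists_eq_add_of_le' (one_le_two.trans hN)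
  exact exists_intermediate_weight_general (hω 0) (hω (Fin.last _)) hWcond

end
end
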